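/- (Gyöngy–Krylov characterization) Let X be a complete separable metric space and {Y_n}_{n≥0} a sequence of X-valued random variables on a probability space (Ω,𝓕,ℙ). Let μ_{m,n}(E) := ℙ{(Y_n,Y_m) ∈ E} for E ∈ 𝓑(X×X) be the joint laws. Then {Y_n}_{n≥1} converges in probability if and only if for every subsequence {μ_{m_k,n_k}}_{k≥1} of the joint probability laws there exists a further subsequence converging weakly to a probability measure μ on X×X such that μ{(u,v) ∈ X×X : u = v} = 1. -/

import Mathlib

/- STATEMENT 17 (Lemma 5.2, Gyöngy–Krylov characterization of convergence in
   probability via joint laws). -/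

noncomputable section
open MeasureTheory Filter Topology

namespace Stmt17

/-- weak convergence of measures, tested against bounded continuous functions -/
def WeakTendsto {X : Type*} [TopologicalSpace X] [MeasurableSpace X]
    (μ : ℕ → Measure X) (ν : Measure X) : Prop :=
  ∀ f : BoundedContinuousFunction X ℝ,
    Tendsto (fun k => ∫ x, f x ∂(μ k)) atTop (𝓝 (∫ x, f x ∂ν))

/-!
If `Y n` tends to `Z` in probability, then the pairs `(Y n, Y m)` tend to `(Z, Z)` in probability,
hence in law, and the law of `(Z, Z)` is carried by the diagonal. Conversely, if the joint laws
converge weakly to a measure carried by the diagonal, the portmanteau theorem applied to the closed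
sets `{p | ε ≤ edist p.1 p.2}`, which miss the diagonal, shows that `edist (Y n) (Y m)` tends to `0`
in probability. By the subsequence principle `Y` is then Cauchy in probability, and Cauchy sequences
in probability converge: a fast subsequence converges almost everywhere by Borel–Cantelli, and
Fatou's lemma transfers the Cauchy bound to its limit.
-/

section

variable {ι Ω E F : Type*} [MeasurableSpace Ω] {P : Measure Ω}

theorem weakTendsto_iff_tendsto_probabilityMeasure [TopologicalSpace E] [MeasurableSpace E]
    [OpensMeasurableSpace E] {μ : ℕ → ProbabilityMeasure E} {ν : ProbabilityMeasure E} :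
    WeakTendsto (fun k => (μ k : Measure E)) ν ↔ Tendsto μ atTop (𝓝 ν) :=
  ProbabilityMeasure.tendsto_iff_forall_integral_tendsto.symm

theorem WeakTendsto.tendsto_measure_zero_of_isClosed [TopologicalSpace E] [MeasurableSpace E]
    [OpensMeasurableSpace E] [HasOuterApproxClosed E] {μ : ℕ → Measure E} {ν : Measure E}
    [∀ k, IsProbabilityMeasure (μ k)] [IsProbabilityMeasure ν] (h : WeakTendsto μ ν)
    {C : Set E} (hC : IsClosed C) (hνC : ν C = 0) :
    Tendsto (fun k => μ k C) atTop (𝓝 0) := by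
  have hμν : Tendsto (β := ProbabilityMeasure E) (fun k => ⟨μ k, inferInstance⟩) atTop
      (𝓝 ⟨ν, inferInstance⟩) :=
    weakTendsto_iff_tendsto_probabilityMeasure.1 h
  have hlimsup : limsup (fun k => μ k C) atTop ≤ ν C :=
    ProbabilityMeasure.limsup_measure_closed_le_of_tendsto hμν hC
  exact tendsto_of_le_liminf_of_limsup_le zero_le (hlimsup.trans hνC.le)

theorem WeakTendsto.tendsto_measure_le_edist_of_ae_eq [PseudoEMetricSpace E]
    [MeasurableSpace E] [OpensMeasurableSpace (E × E)] {μ : ℕ → Measure (E × E)}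
    {ν : Measure (E × E)} [∀ k, IsProbabilityMeasure (μ k)] [IsProbabilityMeasure ν]
    (h : WeakTendsto μ ν) (hν : ∀ᵐ p ∂ν, p.1 = p.2) {ε : ENNReal} (hε : 0 < ε) :
    Tendsto (fun k => μ k {p | ε ≤ edist p.1 p.2}) atTop (𝓝 0) := by
  refine h.tendsto_measure_zero_of_isClosed
    (isClosed_le continuous_const (continuous_fst.edist continuous_snd)) ?_
  refine measure_eq_zero_iff_ae_notMem.2 ?_
  filter_upwards [hν] with p hp
  simpa only [Set.mem_ofPred_eq, hp, edist_self, not_le] using hε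

theorem weakTendsto_map_of_tendstoInMeasure [PseudoEMetricSpace E] [MeasurableSpace E]
    [BorelSpace E] [IsProbabilityMeasure P] {f : ℕ → Ω → E} {g : Ω → E}
    (hfg : TendstoInMeasure P f atTop g) (hf : ∀ n, AEMeasurable (f n) P) :
    WeakTendsto (fun n => P.map (f n)) (P.map g) :=
  weakTendsto_iff_tendsto_probabilityMeasure.2 (hfg.tendstoInDistribution hf).tendsto

theorem tendstoInMeasure_prodMk [PseudoEMetricSpace E] [PseudoEMetricSpace F] {l : Filter ι}
    {f : ι → Ω → E} {g : ι → Ω → F} {u : Ω → E} {v : Ω → F}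
    (hf : TendstoInMeasure P f l u) (hg : TendstoInMeasure P g l v) :
    TendstoInMeasure P (fun i ω => (f i ω, g i ω)) l (fun ω => (u ω, v ω)) := by
  intro ε hε
  have hsum := (hf ε hε).add (hg ε hε)
  rw [add_zero] at hsum
  refine tendsto_of_tendsto_of_tendsto_of_le_of_le tendsto_const_nhds hsum
    (fun _ => zero_le) fun i => ?_
  simp only [Prod.edist_eq, le_max_iff, Set.ofPred_or]
  exact measure_union_le _ _

theorem tendsto_atTop_prod_of_strictMono_subseq {α : Type*} {x : ℕ × ℕ → α} {f : Filter α}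
    (h : ∀ n m : ℕ → ℕ, StrictMono n → StrictMono m →
      ∃ φ : ℕ → ℕ, Tendsto (fun k => x (n (φ k), m (φ k))) atTop f) :
    Tendsto x (atTop ×ˢ atTop) f := by
  refine tendsto_of_subseq_tendsto fun p hp => ?_
  obtain ⟨a, ha, hfst⟩ := strictMono_subseq_of_tendsto_atTop (tendsto_fst.comp hp)
  obtain ⟨b, hb, hsnd⟩ :=
    strictMono_subseq_of_tendsto_atTop ((tendsto_snd.comp hp).comp ha.tendsto_atTop)
  obtain ⟨φ, hφ⟩ := h _ _ (hfst.comp hb) hsnd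
  exact ⟨a ∘ b ∘ φ, hφ⟩

theorem ae_cauchySeq_of_tsum_measure_ne_top [PseudoEMetricSpace E] {f : ℕ → Ω → E}
    {d : ℕ → ENNReal} (hd : ∑' k, d k ≠ ⊤)
    (hf : ∑' k, P {ω | d k ≤ edist (f k ω) (f (k + 1) ω)} ≠ ⊤) :
    ∀ᵐ ω ∂P, CauchySeq fun k => f k ω := by
  filter_upwards [ae_eventually_notMem hf] with ω hω
  obtain ⟨K, hK⟩ := eventually_atTop.1 hω
  have htail : ∑' k, d (k + K) ≠ ⊤ :=
    ne_top_of_le_ne_top hd (ENNReal.tsum_comp_le_tsum_of_injective (add_left_injective K) d)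
  refine (cauchySeq_shift K).1 (cauchySeq_of_edist_le_of_tsum_ne_top _ (fun k => ?_) htail)
  rw [Nat.succ_add]
  exact (not_le.1 (hK (k + K) (Nat.le_add_left K k))).le

theorem measure_le_liminf_of_ae_eventually_mem {s : Set Ω} {t : ℕ → Set Ω}
    (h : ∀ᵐ ω ∂P, ω ∈ s → ∀ᶠ k in atTop, ω ∈ t k) :
    P s ≤ liminf (fun k => P (t k)) atTop := by
  have hmono : Monotone fun n => ⋂ k ≥ n, t k := fun _ _ hnm =>
    Set.biInter_subset_biInter_left fun _ hk => hnm.trans hk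
  calc
    P s ≤ P (⋃ n, ⋂ k ≥ n, t k) := measure_mono_ae <| by
      filter_upwards [h] with ω hω hs
      obtain ⟨n, hn⟩ := eventually_atTop.1 (hω hs)
      exact Set.mem_iUnion.2 ⟨n, Set.mem_iInter₂.2 hn⟩
    _ = ⨆ n, P (⋂ k ≥ n, t k) := hmono.measure_iUnion
    _ ≤ ⨆ n, ⨅ k ≥ n, P (t k) :=
      iSup_mono fun _ => le_iInf₂ fun _ hk => measure_mono (Set.biInter_subset_of_mem hk)
    _ = liminf (fun k => P (t k)) atTop := liminf_eq_iSup_iInf_of_nat.symm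

/-- The family `f` is Cauchy in measure along `l`: `edist (f i) (f j)` tends to `0` in measure as
`i` and `j` tend to `l` independently. This is the completeness criterion for convergence in
measure. As in `TendstoInMeasure`, the level `ε = ⊤` is allowed. -/
def CauchyInMeasure [EDist E] (P : Measure Ω) (f : ι → Ω → E) (l : Filter ι) : Prop :=
  ∀ ε, 0 < ε → Tendsto (fun p : ι × ι => P {ω | ε ≤ edist (f p.1 ω) (f p.2 ω)}) (l ×ˢ l) (𝓝 0)

namespace CauchyInMeasure

theorem comp [EDist E] {κ : Type*} {f : ι → Ω → E} {l : Filter ι} {l' : Filter κ} {u : κ → ι}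
    (hf : CauchyInMeasure P f l) (hu : Tendsto u l' l) : CauchyInMeasure P (f ∘ u) l' :=
  fun ε hε => (hf ε hε).comp (hu.prodMap hu)

theorem exists_subseq_ae_cauchySeq [PseudoEMetricSpace E] {f : ℕ → Ω → E}
    (hf : CauchyInMeasure P f atTop) :
    ∃ φ : ℕ → ℕ, StrictMono φ ∧ ∀ᵐ ω ∂P, CauchySeq fun k => f (φ k) ω := by
  have hfast (k : ℕ) : ∀ᶠ N in atTop, ∀ m ≥ N,
      P {ω | (2⁻¹ : ENNReal) ^ k ≤ edist (f N ω) (f m ω)} ≤ 2⁻¹ ^ k := by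
    have hpos : (0 : ENNReal) < 2⁻¹ ^ k := ENNReal.pow_pos (by simp) k
    obtain ⟨N, hN⟩ := eventually_atTop_prod_self.1
      (prod_atTop_atTop_eq (α := ℕ) (β := ℕ) ▸ (hf _ hpos).eventually_le_const hpos)
    filter_upwards [eventually_ge_atTop N] with n hn m hm
    exact hN n m hn (hn.trans hm)
  obtain ⟨φ, hφ, hbound⟩ := extraction_forall_of_eventually hfast
  have hsum : ∑' k, (2⁻¹ : ENNReal) ^ k ≠ ⊤ := by
    simp [ENNReal.tsum_geometric]
  exact ⟨φ, hφ, ae_cauchySeq_of_tsum_measure_ne_top hsum <| ne_top_of_le_ne_top hsum <|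
    ENNReal.tsum_le_tsum fun k => hbound k _ (hφ.monotone k.le_succ)⟩

theorem tendstoInMeasure_of_ae_tendsto [PseudoEMetricSpace E] {f : ι → Ω → E} {l : Filter ι}
    {u : ℕ → ι} {g : Ω → E} (hf : CauchyInMeasure P f l) (hu : Tendsto u atTop l)
    (hg : ∀ᵐ ω ∂P, Tendsto (fun k => f (u k) ω) atTop (𝓝 (g ω))) :
    TendstoInMeasure P f l g := by
  refine tendstoInMeasure_of_ne_top fun ε hε hε_top => ENNReal.tendsto_nhds_zero.2 fun δ hδ => ?_
  have hhalf : 0 < ε / 2 := ENNReal.half_pos hε.ne'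
  filter_upwards [((hf _ hhalf).eventually_le_const hδ).curry] with i hi
  have hmem : ∀ᵐ ω ∂P, ω ∈ {ω | ε ≤ edist (f i ω) (g ω)} →
      ∀ᶠ k in atTop, ω ∈ {ω | ε / 2 ≤ edist (f i ω) (f (u k) ω)} := by
    filter_upwards [hg] with ω hω hfar
    have hlt : ε / 2 < edist (f i ω) (g ω) := (ENNReal.half_lt_self hε.ne' hε_top).trans_le hfar
    exact (tendsto_const_nhds.edist hω).eventually_const_le hlt
  exact (measure_le_liminf_of_ae_eventually_mem hmem).trans
    (liminf_le_of_frequently_le' (hu.eventually hi).frequently)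

theorem exists_tendstoInMeasure [PseudoEMetricSpace E] [CompleteSpace E] {f : ι → Ω → E}
    {l : Filter ι} [l.NeBot] [l.IsCountablyGenerated] (hf : CauchyInMeasure P f l) :
    ∃ g : Ω → E, TendstoInMeasure P f l g := by
  obtain ⟨u, hu⟩ := exists_seq_tendsto l
  obtain ⟨φ, hφ, hcauchy⟩ := (hf.comp hu).exists_subseq_ae_cauchySeq
  have hlim (ω : Ω) : ∃ x, CauchySeq (fun k => f (u (φ k)) ω) →
      Tendsto (fun k => f (u (φ k)) ω) atTop (𝓝 x) := by
    by_cases hω : CauchySeq fun k => f (u (φ k)) ω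
    · exact (cauchySeq_tendsto_of_complete hω).imp fun _ hx _ => hx
    · exact ⟨f (u 0) ω, fun h => absurd h hω⟩
  choose g hg using hlim
  exact ⟨g, hf.tendstoInMeasure_of_ae_tendsto (hu.comp hφ.tendsto_atTop)
    (hcauchy.mono fun ω => hg ω)⟩

end CauchyInMeasure

theorem gyongy_krylov_general [EMetricSpace E] [CompleteSpace E] [SecondCountableTopology E]
    [MeasurableSpace E] [BorelSpace E] [IsProbabilityMeasure P] {Y : ℕ → Ω → E}
    (hY : ∀ n, AEMeasurable (Y n) P) :
    (∃ Z : Ω → E, TendstoInMeasure P Y atTop Z) ↔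
      ∀ n m : ℕ → ℕ, StrictMono n → StrictMono m →
        ∃ φ : ℕ → ℕ, StrictMono φ ∧ ∃ μ : Measure (E × E), IsProbabilityMeasure μ ∧
          WeakTendsto (fun k => P.map fun ω => (Y (n (φ k)) ω, Y (m (φ k)) ω)) μ ∧
            μ {p : E × E | p.1 = p.2} = 1 := by
  have hpair (i j : ℕ) : AEMeasurable (fun ω => (Y i ω, Y j ω)) P := (hY i).prodMk (hY j)
  have hdiag : MeasurableSet {p : E × E | p.1 = p.2} := measurableSet_diagonal
  constructor
  · rintro ⟨Z, hZ⟩ n m hn hm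
    have hZ_meas : AEMeasurable Z P := hZ.aemeasurable hY
    have hZZ : AEMeasurable (fun ω => (Z ω, Z ω)) P := hZ_meas.prodMk hZ_meas
    have := Measure.isProbabilityMeasure_map hZZ
    have hjoint := tendstoInMeasure_prodMk (hZ.comp hn.tendsto_atTop) (hZ.comp hm.tendsto_atTop)
    exact ⟨id, strictMono_id, P.map fun ω => (Z ω, Z ω), this,
      weakTendsto_map_of_tendstoInMeasure hjoint fun k => hpair (n k) (m k),
      (mem_ae_iff_prob_eq_one hdiag).1 ((ae_map_iff hZZ hdiag).2 (ae_of_all _ fun _ => rfl))⟩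
  · intro h
    refine CauchyInMeasure.exists_tendstoInMeasure fun ε hε =>
      tendsto_atTop_prod_of_strictMono_subseq fun n m hn hm => ?_
    obtain ⟨φ, -, μ, hμ, hweak, hμ_diag⟩ := h n m hn hm
    have (k : ℕ) := Measure.isProbabilityMeasure_map (hpair (n (φ k)) (m (φ k)))
    have hμ_ae : ∀ᵐ p ∂μ, p.1 = p.2 := (mem_ae_iff_prob_eq_one hdiag).2 hμ_diag
    have hzero := hweak.tendsto_measure_le_edist_of_ae_eq hμ_ae hε
    refine ⟨φ, hzero.congr fun k => Measure.map_apply_of_aemeasurable (hpair _ _) ?_⟩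
    exact measurableSet_le measurable_const (measurable_fst.edist measurable_snd)

end

/-- **Gyöngy–Krylov.** Let `X` be a complete separable metric space and `Y n` a sequence
of `X`-valued random variables with joint laws
`μ_{m,n}(E) = ℙ{(Y n, Y m) ∈ E}`.  Then `Y n` converges in probability iff every
subsequence of the joint laws has a further subsequence converging weakly to a
probability measure `μ` on `X × X` concentrated on the diagonal. -/
theorem gyongy_krylov
    {X : Type*} [MetricSpace X] [CompleteSpace X] [TopologicalSpace.SeparableSpace X]
    [MeasurableSpace X] [BorelSpace X]
    {Ω : Type*} [MeasurableSpace Ω] (P : Measure Ω) [IsProbabilityMeasure P]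
    (Y : ℕ → Ω → X) (hY : ∀ n, Measurable (Y n)) :
    (∃ Ylim : Ω → X, TendstoInMeasure P Y atTop Ylim) ↔
      (∀ nk mk : ℕ → ℕ, StrictMono nk → StrictMono mk →
        ∃ φ : ℕ → ℕ, StrictMono φ ∧
          ∃ μ : Measure (X × X), IsProbabilityMeasure μ ∧
            WeakTendsto
              (fun k => P.map (fun ω => (Y (nk (φ k)) ω, Y (mk (φ k)) ω))) μ ∧
            μ {p : X × X | p.1 = p.2} = 1) := by
  have := UniformSpace.secondCountable_of_separable X
  exact gyongy_krylov_general fun n => (hY n).aemeasurable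

end Stmt17
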